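/- arXiv:2207.06980 — 2 statements merged into one kernel-verified Lean document; each statement's English description precedes it below -/
import Mathlib

section
/- For all intuitionistic fuzzy values α and β, 0 ≤ Z(α, β) ≤ 2; equivalently, 0 ≤ JS(α, β) ≤ 1. -/
/-- `L p q = p·log₂(2p/(p+q)) + q·log₂(2q/(p+q))`, with Lean's conventions
`0 * log₂ _ = 0` and `x / 0 = 0`, `log₂ 0 = 0` implementing `0·log 0 = 0`
and `0·log(0/0) = 0`. -/
noncomputable def L (p q : ℝ) : ℝ :=
  p * Real.logb 2 (2 * p / (p + q)) + q * Real.logb 2 (2 * q / (p + q))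

/-- An intuitionistic fuzzy value: a pair `⟨μ, ν⟩` with `0 ≤ μ`, `0 ≤ ν`,
`μ + ν ≤ 1` (hence also `μ ≤ 1` and `ν ≤ 1`). -/
@[ext]
structure IFV where
  mu : ℝ
  nu : ℝ
  mu_nonneg : 0 ≤ mu
  nu_nonneg : 0 ≤ nu
  sum_le : mu + nu ≤ 1

/-- `Z(α,β) = L(1−μ_α, 1−μ_β) + L(ν_α, ν_β)`. -/
noncomputable def Z (a b : IFV) : ℝ := L (1 - a.mu) (1 - b.mu) + L a.nu b.nu

/-- The normalized Jensen–Shannon IF divergence `JS(α,β) = √(Z(α,β)/2)`. -/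
noncomputable def JS (a b : IFV) : ℝ := Real.sqrt (Z a b / 2)

/-- Atanassov's order: `α ⊂ β` iff `μ_α ≤ μ_β` and `ν_α ≥ ν_β`. -/
def IFV.sub (a b : IFV) : Prop := a.mu ≤ b.mu ∧ b.nu ≤ a.nu

/-- Strict Atanassov order: `α ⊊ β` iff `α ⊂ β` and `α ≠ β`. -/
def IFV.ssub (a b : IFV) : Prop := a.sub b ∧ a ≠ b

/-- The IFV `⟨1, 0⟩`. -/
def IFV.posOne : IFV := ⟨1, 0, by norm_num, le_rfl, by norm_num⟩

/-- The IFV `⟨0, 1⟩`. -/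
def IFV.negOne : IFV := ⟨0, 1, le_rfl, by norm_num, by norm_num⟩

/-! Writing `h` for the binary entropy in bits, `L p q = (p + q) * (1 - h (p / (p + q)))`. On
`[0, 1]` the concave function `h` vanishes at the endpoints and has maximum `1` at `1 / 2`, so it
lies between the tent function `1 - |1 - 2 * x|` and `1`. Hence `0 ≤ L p q ≤ |p - q|`, and each of
the two summands of `Z` is at most `1`. -/

open Real

theorem one_sub_abs_mul_log_two_le_binEntropy {x : ℝ} (hx : x ∈ Set.Icc 0 1) :
    (1 - |1 - 2 * x|) * log 2 ≤ binEntropy x := by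
  wlog h : x ≤ 1 / 2 generalizing x
  · have hsymm := this (x := 1 - x) ⟨by linarith [hx.2], by linarith [hx.1]⟩ (by linarith)
    rwa [binEntropy_one_sub, abs_sub_comm, show 2 * (1 - x) - 1 = 1 - 2 * x by ring] at hsymm
  have hchord : (1 - 2 * x) * binEntropy 0 + 2 * x * binEntropy 2⁻¹
      ≤ binEntropy ((1 - 2 * x) * 0 + 2 * x * 2⁻¹) :=
    strictConcave_binEntropy.concaveOn.2 (by norm_num) (by norm_num) (by linarith)
      (by linarith [hx.1]) (by ring)
  rw [abs_of_nonneg (by linarith)]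
  simpa [mul_right_comm (2 : ℝ) x] using hchord

theorem L_eq_mul_one_sub_binEntropy (p q : ℝ) :
    L p q = (p + q) * (1 - binEntropy (p / (p + q)) / log 2) := by
  rcases eq_or_ne (p + q) 0 with hs | hs
  · simp [L, hs]
  have hlog : log 2 ≠ 0 := (log_pos one_lt_two).ne'
  have hsplit (r : ℝ) :
      r * logb 2 (2 * r / (p + q)) = r + r * log (r / (p + q)) / log 2 := by
    rcases eq_or_ne r 0 with rfl | hr
    · simp
    rw [logb, mul_div_assoc, log_mul two_ne_zero (div_ne_zero hr hs)]
    field_simp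
  have hcompl : 1 - p / (p + q) = q / (p + q) := by
    field_simp
    ring
  rw [L, hsplit, hsplit, binEntropy, hcompl, log_inv, log_inv]
  field_simp
  ring

theorem L_nonneg {p q : ℝ} (h : 0 ≤ p + q) : 0 ≤ L p q := by
  rw [L_eq_mul_one_sub_binEntropy]
  exact mul_nonneg h <| sub_nonneg.2 <|
    div_le_one_of_le₀ binEntropy_le_log_two (log_nonneg one_le_two)

theorem L_le_abs_sub {p q : ℝ} (hp : 0 ≤ p) (hq : 0 ≤ q) : L p q ≤ |p - q| := by
  rcases (add_nonneg hp hq).eq_or_lt with hs | hs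
  · simp [L, ← hs]
  have hmem : p / (p + q) ∈ Set.Icc 0 1 := ⟨by positivity, div_le_one_of_le₀ (by linarith) hs.le⟩
  have htent : 1 - |1 - 2 * (p / (p + q))| ≤ binEntropy (p / (p + q)) / log 2 :=
    (le_div_iff₀ (log_pos one_lt_two)).2 (one_sub_abs_mul_log_two_le_binEntropy hmem)
  calc
    L p q = (p + q) * (1 - binEntropy (p / (p + q)) / log 2) := L_eq_mul_one_sub_binEntropy p q
    _ ≤ (p + q) * |1 - 2 * (p / (p + q))| := by gcongr; linarith
    _ = |(p + q) * (1 - 2 * (p / (p + q)))| := by rw [abs_mul, abs_of_pos hs]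
    _ = |q - p| := by congr 1; field_simp; ring
    _ = |p - q| := abs_sub_comm q p

theorem IFV.mu_le_one (a : IFV) : a.mu ≤ 1 := by
  linarith [a.nu_nonneg, a.sum_le]

theorem IFV.nu_le_one (a : IFV) : a.nu ≤ 1 := by
  linarith [a.mu_nonneg, a.sum_le]

theorem Z_nonneg (a b : IFV) : 0 ≤ Z a b :=
  add_nonneg (L_nonneg (by linarith [a.mu_le_one, b.mu_le_one]))
    (L_nonneg (add_nonneg a.nu_nonneg b.nu_nonneg))

theorem Z_le_abs_sub_add_abs_sub (a b : IFV) : Z a b ≤ |a.mu - b.mu| + |a.nu - b.nu| := by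
  have hmu := L_le_abs_sub (sub_nonneg.2 a.mu_le_one) (sub_nonneg.2 b.mu_le_one)
  rw [sub_sub_sub_cancel_left, abs_sub_comm] at hmu
  exact add_le_add hmu (L_le_abs_sub a.nu_nonneg b.nu_nonneg)

theorem Z_mem_zero_two_and_JS_mem_zero_one (a b : IFV) :
    (0 ≤ Z a b ∧ Z a b ≤ 2) ∧ (0 ≤ JS a b ∧ JS a b ≤ 1) := by
  have hmu : |a.mu - b.mu| ≤ 1 :=
    abs_sub_le_of_nonneg_of_le a.mu_nonneg a.mu_le_one b.mu_nonneg b.mu_le_one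
  have hnu : |a.nu - b.nu| ≤ 1 :=
    abs_sub_le_of_nonneg_of_le a.nu_nonneg a.nu_le_one b.nu_nonneg b.nu_le_one
  have hZ : Z a b ≤ 2 := by linarith [Z_le_abs_sub_add_abs_sub a b]
  exact ⟨⟨Z_nonneg a b, hZ⟩, sqrt_nonneg _, sqrt_le_one.2 (by linarith)⟩
end

section
/- Define Xiao's distance for intuitionistic fuzzy values α, β by d_χ(α, β) = √( (1/2)[ L(μ_α, μ_β) + L(ν_α, ν_β) + L(π_α, π_β) ] ), where π_α = 1 − μ_α − ν_α. For every λ ∈ [0,1]: d_χ(⟨1,0⟩, ⟨λ,0⟩) = √( (1/2)[ log₂(2/(1+λ)) + λ·log₂(2λ/(1+λ)) + (1−λ) ] ) = d_χ(⟨1,0⟩, ⟨λ,1−λ⟩), and d_χ(⟨0,1⟩, ⟨λ,0⟩) = 1. -/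
/-- Xiao's distance
`d_χ(α,β) = √((1/2)[L(μ_α,μ_β)+L(ν_α,ν_β)+L(π_α,π_β)])` with
`π_α = 1 − μ_α − ν_α`. -/
noncomputable def dChi (a b : IFV) : ℝ :=
  Real.sqrt ((L a.mu b.mu + L a.nu b.nu +
    L (1 - a.mu - a.nu) (1 - b.mu - b.nu)) / 2)

/-!
Since `L 0 q = q`, each coordinate in which a crisp value vanishes contributes linearly to the sum
under the root, and the three degrees of an IFV sum to `1`. Hence `dChi IFV.posOne b` depends on
`b.mu` alone and `dChi IFV.negOne b` on `b.nu` alone, whatever the split of the remaining mass.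
-/

theorem L_comm (p q : ℝ) : L p q = L q p := by
  rw [L, L, add_comm p q, add_comm]

theorem L_zero_left (q : ℝ) : L 0 q = q := by
  rcases eq_or_ne q 0 with rfl | hq
  · simp only [L, zero_mul, add_zero]
  · simp [L, hq]

theorem L_zero_right (p : ℝ) : L p 0 = p := by
  rw [L_comm, L_zero_left]

theorem L_one_left (q : ℝ) :
    L 1 q = Real.logb 2 (2 / (1 + q)) + q * Real.logb 2 (2 * q / (1 + q)) := by
  rw [L, one_mul, mul_one]

theorem dChi_posOne_left (b : IFV) :
    dChi IFV.posOne b = Real.sqrt ((L 1 b.mu + (1 - b.mu)) / 2) := by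
  have hpi : (1 : ℝ) - 1 - 0 = 0 := by norm_num
  simp only [dChi, IFV.posOne, hpi, L_zero_left]
  congr 2
  ring

theorem dChi_negOne_left (b : IFV) :
    dChi IFV.negOne b = Real.sqrt ((L 1 b.nu + (1 - b.nu)) / 2) := by
  have hpi : (1 : ℝ) - 0 - 1 = 0 := by norm_num
  simp only [dChi, IFV.negOne, hpi, L_zero_left]
  congr 2
  ring

theorem dChi_degenerate (l : ℝ) (hl0 : 0 ≤ l) (hl1 : l ≤ 1) :
    dChi IFV.posOne ⟨l, 0, hl0, le_rfl, by linarith⟩ =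
      Real.sqrt ((Real.logb 2 (2 / (1 + l)) + l * Real.logb 2 (2 * l / (1 + l))
        + (1 - l)) / 2) ∧
    dChi IFV.posOne ⟨l, 0, hl0, le_rfl, by linarith⟩ =
      dChi IFV.posOne ⟨l, 1 - l, hl0, by linarith, by linarith⟩ ∧
    dChi IFV.negOne ⟨l, 0, hl0, le_rfl, by linarith⟩ = 1 := by
  refine ⟨?_, ?_, ?_⟩
  · rw [dChi_posOne_left, L_one_left]
  · rw [dChi_posOne_left, dChi_posOne_left]
  · rw [dChi_negOne_left, L_zero_right]
    norm_num
end
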